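/- arXiv:0812.5002 — 2 statements merged into one kernel-verified Lean document; each statement's English description precedes it below -/
import Mathlib

section
/- Let L be the centerless twisted N=2 superconformal algebra, V = L ⊗ L the L-module under the adjoint diagonal action, and let d₀ be an even (parity 0̄) homogeneous super-derivation from L to V of degree 0 with respect to the (1/2)ℤ-grading. Then d₀ is inner: there exists u ∈ V_0 such that d₀(x) = x ∗ u for all x ∈ L. -/
namespace N2

/-- Basis indices of the centerless twisted N=2 superconformal algebra:
`L m` is the Virasoro generator `L_m` (`m ∈ ℤ`),
`T k` is the Heisenberg generator `T_{k+1/2}` (`k ∈ ℤ`, index in `1/2 + ℤ`),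
`G n` is the fermionic generator `G_{n/2}` (`n ∈ ℤ`, index in `(1/2)ℤ`). -/
inductive Idx : Type
  | L : ℤ → Idx
  | T : ℤ → Idx
  | G : ℤ → Idx
  deriving DecidableEq

noncomputable section

/-- The centerless twisted N=2 superconformal algebra `𝓛`, as the free
complex vector space on the basis `{L_m, T_r, G_p}`. -/
abbrev Lsa : Type := Idx →₀ ℂ

/-- `𝓛 ⊗ 𝓛`, realized as the free complex vector space on pairs of basis indices. -/
abbrev V : Type := (Idx × Idx) →₀ ℂ

/-- `𝓛 ⊗ 𝓛 ⊗ 𝓛`. -/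
abbrev W : Type := (Idx × Idx × Idx) →₀ ℂ

/-- the basis vector indexed by `i`. -/
def e (i : Idx) : Lsa := Finsupp.single i 1

/-- the ℤ₂-parity of the basis elements: `L_m, T_r` are even, `G_p` is odd. -/
def par : Idx → ZMod 2
  | .L _ => 0
  | .T _ => 0
  | .G _ => 1

/-- the sign `(-1)^p` for `p ∈ ℤ₂`. -/
def sgn (p : ZMod 2) : ℂ := if p = 0 then 1 else -1

/-- the `(1/2)ℤ`-degree of a basis element, as a rational number:
`L_m ↦ m`, `T_{k+1/2} ↦ k + 1/2`, `G_{n/2} ↦ n/2`. -/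
def qdeg : Idx → ℚ
  | .L m => (m : ℚ)
  | .T k => (k : ℚ) + 1/2
  | .G n => (n : ℚ) / 2

/-- The super-bracket of `𝓛` on basis elements:
`[L_m, L_n] = (m-n) L_{m+n}`, `[L_m, T_r] = -r T_{r+m}`, `[T_r, T_s] = 0`,
`[L_m, G_p] = (m/2 - p) G_{p+m}`, `[T_r, G_p] = G_{p+r}`,
`[G_p, G_q] = (-1)^{2p} 2 L_{p+q}` if `p+q ∈ ℤ` and
`[G_p, G_q] = (-1)^{2p+1} (p-q) T_{p+q}` if `p+q ∈ 1/2+ℤ`,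
together with the super skew-symmetric counterparts. -/
def bk : Idx → Idx → Lsa
  | .L m, .L n => ((m : ℂ) - n) • e (.L (m + n))
  | .L m, .T k => (-((k : ℂ) + 1/2)) • e (.T (k + m))
  | .L m, .G n => (((m : ℂ) - n) / 2) • e (.G (n + 2*m))
  | .T k, .L m => ((k : ℂ) + 1/2) • e (.T (k + m))
  | .T _, .T _ => 0
  | .T k, .G n => e (.G (n + 2*k + 1))
  | .G n, .L m => (-((m : ℂ) - n) / 2) • e (.G (n + 2*m))
  | .G n, .T k => - e (.G (n + 2*k + 1))
  | .G n, .G n' =>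
      if (n + n') % 2 = 0 then
        ((-1 : ℂ) ^ n * 2) • e (.L ((n + n') / 2))
      else
        ((-1 : ℂ) ^ (n + 1) * (((n : ℂ) - n') / 2)) • e (.T ((n + n' - 1) / 2))

/-- the bracket of `𝓛`, extended bilinearly to all of `𝓛`. -/
def br (x y : Lsa) : Lsa :=
  x.sum fun i a => y.sum fun j b => (a * b) • bk i j

/-- the adjoint diagonal action of `𝓛` on `𝓛 ⊗ 𝓛`:
`x ∗ (a ⊗ b) = [x,a] ⊗ b + (-1)^{[x][a]} a ⊗ [x,b]`. -/
def act2 (x : Lsa) (v : V) : V :=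
  x.sum fun i a => v.sum fun p c =>
    (a * c) •
      (((bk i p.1).sum fun k t => Finsupp.single (k, p.2) t)
        + sgn (par i * par p.1) • ((bk i p.2).sum fun k t => Finsupp.single (p.1, k) t))

/-- the adjoint diagonal action of `𝓛` on `𝓛 ⊗ 𝓛 ⊗ 𝓛`. -/
def act3 (x : Lsa) (w : W) : W :=
  x.sum fun i a => w.sum fun p c =>
    (a * c) •
      (((bk i p.1).sum fun k t => Finsupp.single (k, p.2.1, p.2.2) t)
        + sgn (par i * par p.1) •
            ((bk i p.2.1).sum fun k t => Finsupp.single (p.1, k, p.2.2) t)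
        + sgn (par i * (par p.1 + par p.2.1)) •
            ((bk i p.2.2).sum fun k t => Finsupp.single (p.1, p.2.1, k) t))

/-- the adjoint diagonal action of `𝓛` on the `n`-fold tensor power `𝓛^{⊗n}`,
realized as the free complex vector space on `n`-tuples of basis indices:
`x ∗ (a₁ ⊗ ⋯ ⊗ aₙ) = Σ_k (-1)^{[x]([a₁]+⋯+[a_{k-1}])} a₁ ⊗ ⋯ ⊗ [x,a_k] ⊗ ⋯ ⊗ aₙ`. -/
def actN (n : ℕ) (x : Lsa) (v : (Fin n → Idx) →₀ ℂ) : (Fin n → Idx) →₀ ℂ :=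
  x.sum fun i a => v.sum fun f c =>
    (a * c) •
      (Finset.univ.sum fun k : Fin n =>
        sgn (par i * ((Finset.univ.filter fun l => l < k).sum fun l => par (f l))) •
          ((bk i (f k)).sum fun j t => Finsupp.single (Function.update f k j) t))

/-- the super-twist map `τ : 𝓛 ⊗ 𝓛 → 𝓛 ⊗ 𝓛`, `τ(x ⊗ y) = (-1)^{[x][y]} y ⊗ x`. -/
def tau (v : V) : V :=
  v.sum fun p c => (sgn (par p.1 * par p.2) * c) • Finsupp.single (p.2, p.1) 1

/-- the image `Im(1⊗1 - τ) ⊂ 𝓛 ⊗ 𝓛`. -/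
def ImOneSubTau : Set V := Set.range fun v : V => v - tau v

/-- the super-cyclic map `ξ` on `𝓛 ⊗ 𝓛 ⊗ 𝓛`:
`ξ(x₁ ⊗ x₂ ⊗ x₃) = (-1)^{[x₁]([x₂]+[x₃])} x₂ ⊗ x₃ ⊗ x₁`. -/
def xi (w : W) : W :=
  w.sum fun p c =>
    (sgn (par p.1 * (par p.2.1 + par p.2.2)) * c) • Finsupp.single (p.2.1, p.2.2, p.1) 1

/-- `c(r) = [r¹², r¹³] + [r¹², r²³] + [r¹³, r²³] ∈ 𝓛 ⊗ 𝓛 ⊗ 𝓛` for `r ∈ 𝓛 ⊗ 𝓛`. -/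
def cYB (r : V) : W :=
  r.sum fun p a => r.sum fun q b =>
    (a * b) •
      (sgn (par q.1 * par p.2) •
          ((bk p.1 q.1).sum fun k t => Finsupp.single (k, p.2, q.2) t)
        + ((bk p.2 q.1).sum fun k t => Finsupp.single (p.1, k, q.2) t)
        + sgn (par q.1 * par p.2) •
            ((bk p.2 q.2).sum fun k t => Finsupp.single (p.1, q.1, k) t))

/-- `1 ⊗ D : 𝓛 ⊗ 𝓛 → 𝓛 ⊗ 𝓛 ⊗ 𝓛` for an even map `D : 𝓛 → 𝓛 ⊗ 𝓛`. -/
def oneTensorMap (D : Lsa → V) (v : V) : W :=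
  v.sum fun p c => c • ((D (e p.2)).sum fun q t => Finsupp.single (p.1, q.1, q.2) t)

/-- `r ∈ 𝓛 ⊗ 𝓛` is homogeneous of parity `ε ∈ ℤ₂`. -/
def IsParityV (ε : ZMod 2) (r : V) : Prop := ∀ p ∈ r.support, par p.1 + par p.2 = ε

/-- `r ∈ 𝓛 ⊗ 𝓛` is even (degree `0̄`). -/
def IsEvenV (r : V) : Prop := IsParityV 0 r

/-- `r` lies in the graded component `V_ι = Σ_{j+k=ι} 𝓛_j ⊗ 𝓛_k` of `V = 𝓛 ⊗ 𝓛`. -/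
def IsDegV (ι : ℚ) (r : V) : Prop := ∀ p ∈ r.support, qdeg p.1 + qdeg p.2 = ι

/-- the linear map `𝓛 → M` with the prescribed values on the basis. -/
def ofBasis {M : Type*} [AddCommMonoid M] [Module ℂ M] (g : Idx → M) : Lsa →ₗ[ℂ] M :=
  Finsupp.lsum ℂ fun i => LinearMap.toSpanSingleton ℂ M (g i)

/-- the inner super-derivation `a_inn` attached to `a ∈ 𝓛 ⊗ 𝓛` of parity `ε`:
`a_inn(x) = (-1)^{[a][x]} x ∗ a` for homogeneous `x`, extended linearly. -/
def innMap (ε : ZMod 2) (a : V) : Lsa →ₗ[ℂ] V :=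
  ofBasis fun i => sgn (ε * par i) • act2 (e i) a

/-- `d : 𝓛 → 𝓛 ⊗ 𝓛` is a super-derivation of parity `ε`:
`d(𝓛_ī) ⊆ V_{ī+ε}` and
`d([x,y]) = (-1)^{[d][x]} x ∗ d(y) - (-1)^{[y]([d]+[x])} y ∗ d(x)`
for homogeneous `x, y` (stated on basis elements and extended bilinearly). -/
def IsDerOfParity (ε : ZMod 2) (d : Lsa →ₗ[ℂ] V) : Prop :=
  (∀ i : Idx, IsParityV (par i + ε) (d (e i))) ∧
  (∀ i j : Idx,
    d (bk i j)
      = sgn (ε * par i) • act2 (e i) (d (e j))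
        - sgn (par j * (ε + par i)) • act2 (e j) (d (e i)))

/-- `d` is homogeneous of degree `ι ∈ (1/2)ℤ` with respect to the `(1/2)ℤ`-grading:
`d(𝓛_j) ⊆ V_{ι+j}`. -/
def IsDegHomogDer (ι : ℚ) (d : Lsa →ₗ[ℂ] V) : Prop :=
  ∀ i : Idx, IsDegV (ι + qdeg i) (d (e i))

/-- `D : 𝓛 → 𝓛 ⊗ 𝓛` defines a Lie super-bialgebra structure on `𝓛`: it is linear,
`D(𝓛_ī) ⊆ Σ_j 𝓛_j̄ ⊗ 𝓛_{ī-j̄}`, `Im D ⊆ Im(1⊗1-τ)`,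
`(1⊗1⊗1 + ξ + ξ²)(1 ⊗ D)D = 0`, and
`D([x,y]) = x ∗ D(y) - (-1)^{[x][y]} y ∗ D(x)`. -/
structure IsLieSuperBialgebraDelta (D : Lsa → V) : Prop where
  linear : IsLinearMap ℂ D
  parity : ∀ i : Idx, IsParityV (par i) (D (e i))
  skewIm : ∀ x : Lsa, D x ∈ ImOneSubTau
  coJacobi : ∀ x : Lsa,
    oneTensorMap D (D x) + xi (oneTensorMap D (D x)) + xi (xi (oneTensorMap D (D x))) = 0
  cocycle : ∀ i j : Idx,
    D (bk i j) = act2 (e i) (D (e j)) - sgn (par i * par j) • act2 (e j) (D (e i))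

/-!
Coefficientwise, a bracket with `T_r` is a shift. Since `d(T_r)` and `d(T_s)` satisfy `T_r ∗ d(T_s)
= T_s ∗ d(T_r)`, comparing the finitely supported `L ⊗ T` and `T ⊗ L` coefficients, with the help of
`[L_1, T_r]`, shows that they come from one vector of `L ⊗ L`. On `G ⊗ G`, with `G_{n/2}` read as
the monomial `X^n`, `T_{1/2}` acts on vectors of fixed degree as multiplication by `1 + X`; the
relations for `[L_1, T_{1/2}]` and `[L_{-1}, T_{3/2}]` make `d(T_{1/2})` vanish at `X = -1`, so it
can be divided by `1 + X`. After subtracting an inner derivation `d` kills `T_{1/2}`, and then every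
`T_r`.

What is left is `d(G_0)`. As `T_{1/2} ∗ T_{1/2} ∗ d(G_0) = T_r ∗ T_{1-r} ∗ d(G_0)` for all `r`, it
has no `L ⊗ G` or `G ⊗ L` part, and `[G_0, G_0] = 2 L_0` makes it equal to `G_0 ∗ w` for a vector
`w` of `T ⊗ T`, which all `T_r` annihilate. The `T_r` and `G_0` generate the algebra.
-/

section Signs

lemma sgn_zero : sgn 0 = 1 := if_pos rfl

lemma sgn_one : sgn 1 = -1 := if_neg one_ne_zero

lemma sgn_add (a b : ZMod 2) : sgn (a + b) = sgn a * sgn b := by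
  have h : (1 + 1 : ZMod 2) = 0 := by decide
  have cases : ∀ c : ZMod 2, c = 0 ∨ c = 1 := by decide
  rcases cases a with rfl | rfl <;> rcases cases b with rfl | rfl <;> simp [sgn, h]

lemma sgn_mul_self (a : ZMod 2) : sgn a * sgn a = 1 := by
  rw [← sgn_add, CharTwo.add_self_eq_zero, sgn_zero]

end Signs

section Bilinear

lemma ofBasis_e {M : Type*} [AddCommMonoid M] [Module ℂ M] (g : Idx → M) (i : Idx) :
    ofBasis g (e i) = g i := by
  simp [ofBasis, e]

lemma linearMap_ext_e {M : Type*} [AddCommMonoid M] [Module ℂ M] {f g : Lsa →ₗ[ℂ] M}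
    (h : ∀ i, f (e i) = g (e i)) : f = g :=
  Finsupp.lhom_ext' fun i => LinearMap.ext_ring (h i)

/-- The super-bracket of `𝓛` as a bilinear map. -/
def bracket : Lsa →ₗ[ℂ] Lsa →ₗ[ℂ] Lsa := ofBasis fun i => ofBasis (bk i)

lemma bracket_e_e (i j : Idx) : bracket (e i) (e j) = bk i j := by
  simp only [bracket, ofBasis_e]

/-- The pure tensor `x ⊗ y`, read in the model of `𝓛 ⊗ 𝓛` by functions on pairs of indices. -/
def tmul : Lsa →ₗ[ℂ] Lsa →ₗ[ℂ] V :=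
  (TensorProduct.mk ℂ Lsa Lsa).compr₂ (finsuppTensorFinsupp' ℂ Idx Idx).toLinearMap

lemma tmul_apply (x y : Lsa) (p : Idx × Idx) : tmul x y p = x p.1 * y p.2 :=
  finsuppTensorFinsupp'_apply_apply ..

lemma tmul_e_e (i j : Idx) : tmul (e i) (e j) = Finsupp.single (i, j) 1 := by
  simp [tmul, e, finsuppTensorFinsupp'_single_tmul_single]

lemma tmul_e_right (x : Lsa) (j : Idx) :
    tmul x (e j) = x.sum fun k t => Finsupp.single (k, j) t := by
  have h : tmul.flip (e j) = Finsupp.lmapDomain ℂ ℂ (·, j) :=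
    linearMap_ext_e fun i => by
      rw [LinearMap.flip_apply, tmul_e_e, e, Finsupp.lmapDomain_apply, Finsupp.mapDomain_single]
  exact LinearMap.congr_fun h x

lemma V_hom_ext {M : Type*} [AddCommMonoid M] [Module ℂ M] {f g : V →ₗ[ℂ] M}
    (h : ∀ i j, f (tmul (e i) (e j)) = g (tmul (e i) (e j))) : f = g := by
  simp only [tmul_e_e] at h
  exact Finsupp.lhom_ext' fun p => LinearMap.ext_ring (h p.1 p.2)

/-- The adjoint diagonal action of `𝓛` on `𝓛 ⊗ 𝓛` as a bilinear map. -/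
def action : Lsa →ₗ[ℂ] V →ₗ[ℂ] V :=
  ofBasis fun i => Finsupp.linearCombination ℂ fun p : Idx × Idx =>
    tmul (bk i p.1) (e p.2) + sgn (par i * par p.1) • tmul (e p.1) (bk i p.2)

lemma action_tmul_e_e (i j k : Idx) : action (e i) (tmul (e j) (e k)) =
    tmul (bk i j) (e k) + sgn (par i * par j) • tmul (e j) (bk i k) := by
  simp [action, ofBasis_e, tmul_e_e]

lemma action_tmul_e_right (i j : Idx) (y : Lsa) : action (e i) (tmul (e j) y) =
    tmul (bk i j) y + sgn (par i * par j) • tmul (e j) (bracket (e i) y) := by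
  have h : action (e i) ∘ₗ tmul (e j) =
      tmul (bk i j) + sgn (par i * par j) • tmul (e j) ∘ₗ bracket (e i) :=
    linearMap_ext_e fun k => by
      simp only [LinearMap.comp_apply, action_tmul_e_e, LinearMap.add_apply, LinearMap.smul_apply,
        bracket_e_e]
  exact LinearMap.congr_fun h y

lemma act2_eq_action (x : Lsa) (v : V) : act2 x v = action x v := by
  have tmul_e_left (i : Idx) (y : Lsa) :
      tmul (e i) y = y.sum fun k t => Finsupp.single (i, k) t := by
    have h : tmul (e i) = Finsupp.lmapDomain ℂ ℂ (Prod.mk i) := linearMap_ext_e fun j => by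
      rw [tmul_e_e, e, Finsupp.lmapDomain_apply, Finsupp.mapDomain_single]
    exact LinearMap.congr_fun h y
  simp only [act2, action, ofBasis, Finsupp.lsum_apply, Finsupp.sum, LinearMap.sum_apply,
    LinearMap.toSpanSingleton_apply, LinearMap.smul_apply, Finsupp.linearCombination_apply,
    Finset.smul_sum, tmul_e_left, tmul_e_right, mul_smul]

end Bilinear

section Jacobi

lemma bk_L_L (m n : ℤ) : bk (.L m) (.L n) = ((m : ℂ) - n) • e (.L (m + n)) := rfl

lemma bk_L_T (m k : ℤ) : bk (.L m) (.T k) = (-((k : ℂ) + 1 / 2)) • e (.T (k + m)) := rfl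

lemma bk_L_G (m n : ℤ) : bk (.L m) (.G n) = (((m : ℂ) - n) / 2) • e (.G (n + 2 * m)) := rfl

lemma bk_T_L (k m : ℤ) : bk (.T k) (.L m) = ((k : ℂ) + 1 / 2) • e (.T (k + m)) := rfl

lemma bk_T_T (k l : ℤ) : bk (.T k) (.T l) = 0 := rfl

lemma bk_T_G (k n : ℤ) : bk (.T k) (.G n) = e (.G (n + 2 * k + 1)) := rfl

lemma bk_G_L (n m : ℤ) : bk (.G n) (.L m) = (-((m : ℂ) - n) / 2) • e (.G (n + 2 * m)) := rfl

lemma bk_G_T (n k : ℤ) : bk (.G n) (.T k) = - e (.G (n + 2 * k + 1)) := rfl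

lemma bk_G_G_of_add_even {n n' t : ℤ} (h : n + n' = 2 * t) :
    bk (.G n) (.G n') = ((-1 : ℂ) ^ n * 2) • e (.L t) := by
  simp only [bk, if_pos (show (n + n') % 2 = 0 by omega), show (n + n') / 2 = t by omega]

lemma bk_G_G_of_add_odd {n n' t : ℤ} (h : n + n' = 2 * t + 1) :
    bk (.G n) (.G n') = ((-1 : ℂ) ^ (n + 1) * (((n : ℂ) - n') / 2)) • e (.T t) := by
  simp only [bk, if_neg (show ¬ (n + n') % 2 = 0 by omega), show (n + n' - 1) / 2 = t by omega]

lemma bk_G_even_G_even (a b : ℤ) :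
    bk (.G (2 * a)) (.G (2 * b)) = (2 : ℂ) • e (.L (a + b)) := by
  rw [bk_G_G_of_add_even (mul_add 2 a b).symm, (even_two_mul a).neg_one_zpow, one_mul]

lemma bk_G_odd_G_odd (a b : ℤ) :
    bk (.G (2 * a + 1)) (.G (2 * b + 1)) = (-2 : ℂ) • e (.L (a + b + 1)) := by
  rw [bk_G_G_of_add_even (t := a + b + 1) (by ring), (odd_two_mul_add_one a).neg_one_zpow,
    neg_one_mul]

lemma bk_G_even_G_odd (a b : ℤ) :
    bk (.G (2 * a)) (.G (2 * b + 1)) = ((b : ℂ) - a + 1 / 2) • e (.T (a + b)) := by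
  rw [bk_G_G_of_add_odd (t := a + b) (by ring), (odd_two_mul_add_one a).neg_one_zpow]
  congr 1
  push_cast
  ring

lemma bk_G_odd_G_even (a b : ℤ) :
    bk (.G (2 * a + 1)) (.G (2 * b)) = ((a : ℂ) - b + 1 / 2) • e (.T (a + b)) := by
  rw [bk_G_G_of_add_odd (t := a + b) (by ring), (odd_two_mul_add_one a).add_one.neg_one_zpow]
  congr 1
  push_cast
  ring

lemma Idx.parityCases {P : Idx → Prop} (hL : ∀ m, P (.L m)) (hT : ∀ k, P (.T k))
    (hG₀ : ∀ n, P (.G (2 * n))) (hG₁ : ∀ n, P (.G (2 * n + 1))) : ∀ i, P i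
  | .L m => hL m
  | .T k => hT k
  | .G n => by
    obtain ⟨t, rfl | rfl⟩ := Int.even_or_odd' n
    exacts [hG₀ t, hG₁ t]

set_option maxHeartbeats 4000000 in
-- 64 cases, by the type and parity of each of the three basis vectors
lemma bracket_bk (i j k : Idx) : bracket (bk i j) (e k) =
    bracket (e i) (bk j k) - sgn (par i * par j) • bracket (e j) (bk i k) := by
  have odd_add (a b : ℤ) : 2 * a + 1 + 2 * b = 2 * (a + b) + 1 := by ring
  have odd_add_one (a : ℤ) : 2 * a + 1 + 1 = 2 * (a + 1) := by ring
  induction i using Idx.parityCases <;> induction j using Idx.parityCases <;>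
    induction k using Idx.parityCases <;>
    simp only [bk_L_L, bk_L_T, bk_L_G, bk_T_L, bk_T_T, bk_T_G, bk_G_L, bk_G_T, map_neg,
      map_smul, map_zero, LinearMap.smul_apply, LinearMap.neg_apply, LinearMap.zero_apply,
      bracket_e_e, par, mul_zero, mul_one, sgn_zero, sgn_one, odd_add, odd_add_one,
      ← mul_add, bk_G_even_G_even, bk_G_odd_G_odd, bk_G_even_G_odd, bk_G_odd_G_even] <;>
    push_cast <;> ring_nf <;> try module

end Jacobi

section Homogeneity

lemma bk_homogeneous (i j : Idx) :
    ∃ (c : ℂ) (k : Idx), bk i j = c • e k ∧ par k = par i + par j ∧ qdeg k = qdeg i + qdeg j := by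
  rcases i with m | m | m <;> rcases j with n | n | n
  · exact ⟨_, _, rfl, by simp [par], by simp [qdeg]⟩
  · exact ⟨_, _, rfl, by simp [par], by simp [qdeg]; ring⟩
  · exact ⟨_, _, rfl, by simp [par], by simp [qdeg]; ring⟩
  · exact ⟨_, _, rfl, by simp [par], by simp [qdeg]; ring⟩
  · exact ⟨0, .L (m + n + 1), by simp [bk_T_T], by simp [par], by simp [qdeg]; ring⟩
  · exact ⟨1, _, (one_smul ℂ _).symm, by simp [par], by simp [qdeg]; ring⟩
  · exact ⟨_, _, rfl, by simp [par], by simp [qdeg]; ring⟩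
  · exact ⟨-1, _, (neg_one_smul ℂ _).symm, by simp [par], by simp [qdeg]; ring⟩
  · obtain ⟨t, ht | ht⟩ := Int.even_or_odd' (m + n)
    · have ht' : (m : ℚ) + n = 2 * t := mod_cast ht
      exact ⟨_, _, bk_G_G_of_add_even ht, rfl, by simp only [qdeg]; linarith⟩
    · have ht' : (m : ℚ) + n = 2 * t + 1 := mod_cast ht
      exact ⟨_, _, bk_G_G_of_add_odd ht, rfl, by simp only [qdeg]; linarith⟩

/-- The component of `𝓛 ⊗ 𝓛` of total weight `a`, for basis elements weighted by `δ`; with `δ = par`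
and `δ = qdeg` this is the space cut out by `IsParityV a`, respectively `IsDegV a`. -/
def weightSpace {A : Type*} [Add A] (δ : Idx → A) (a : A) : Submodule ℂ V :=
  Finsupp.supported ℂ ℂ {p | δ p.1 + δ p.2 = a}

variable {A : Type*} {δ : Idx → A} {a : A} {v : V}

lemma mem_weightSpace [Add A] :
    v ∈ weightSpace δ a ↔ ∀ p : Idx × Idx, v p ≠ 0 → δ p.1 + δ p.2 = a := by
  simp only [weightSpace, Finsupp.mem_supported, Set.subset_def, Finset.mem_coe,
    Finsupp.mem_support_iff, Set.mem_ofPred_eq]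

lemma tmul_e_e_mem_weightSpace [Add A] {i j : Idx} (h : δ i + δ j = a) :
    tmul (e i) (e j) ∈ weightSpace δ a := by
  rw [tmul_e_e]
  exact Finsupp.single_mem_supported ℂ 1 h

lemma action_mem_weightSpace [AddCommSemigroup A]
    (hδ : ∀ i j, ∃ (c : ℂ) (k : Idx), bk i j = c • e k ∧ δ k = δ i + δ j) (i : Idx)
    (hv : v ∈ weightSpace δ a) : action (e i) v ∈ weightSpace δ (δ i + a) := by
  suffices h : weightSpace δ a ≤ (weightSpace δ (δ i + a)).comap (action (e i)) from h hv
  rw [weightSpace, Finsupp.supported_eq_span_single, Submodule.span_le]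
  rintro _ ⟨⟨j, k⟩, rfl, rfl⟩
  obtain ⟨c, j', hj, hj'⟩ := hδ i j
  obtain ⟨c', k', hk, hk'⟩ := hδ i k
  simp only [SetLike.mem_coe, Submodule.mem_comap, ← tmul_e_e, action_tmul_e_e, hj, hk, map_smul,
    LinearMap.smul_apply]
  have hl : tmul (e j') (e k) ∈ weightSpace δ (δ i + (δ j + δ k)) :=
    tmul_e_e_mem_weightSpace (by rw [hj', add_assoc])
  have hr : tmul (e j) (e k') ∈ weightSpace δ (δ i + (δ j + δ k)) :=
    tmul_e_e_mem_weightSpace (by rw [hk', add_left_comm])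
  exact add_mem (Submodule.smul_mem _ _ hl) (Submodule.smul_mem _ _ (Submodule.smul_mem _ _ hr))

lemma action_mem_weightSpace_par (i : Idx) {ε : ZMod 2} (hv : v ∈ weightSpace par ε) :
    action (e i) v ∈ weightSpace par (par i + ε) :=
  action_mem_weightSpace (fun i j =>
    let ⟨c, k, h, hk, _⟩ := bk_homogeneous i j; ⟨c, k, h, hk⟩) i hv

lemma action_mem_weightSpace_qdeg (i : Idx) {ι : ℚ} (hv : v ∈ weightSpace qdeg ι) :
    action (e i) v ∈ weightSpace qdeg (qdeg i + ι) :=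
  action_mem_weightSpace (fun i j =>
    let ⟨c, k, h, _, hk⟩ := bk_homogeneous i j; ⟨c, k, h, hk⟩) i hv

end Homogeneity

section Module

lemma action_tmul_bk (i j k : Idx) (y : Lsa) : action (e i) (tmul (bk j k) y) =
    tmul (bracket (e i) (bk j k)) y +
      sgn (par i * (par j + par k)) • tmul (bk j k) (bracket (e i) y) := by
  obtain ⟨c, l, h, hl, -⟩ := bk_homogeneous j k
  rw [h, ← hl]
  simp only [map_smul, LinearMap.smul_apply, action_tmul_e_right, bracket_e_e, smul_add]
  rw [smul_comm]

lemma action_bk_tmul (i j k : Idx) (y : Lsa) : action (bk i j) (tmul (e k) y) =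
    tmul (bracket (bk i j) (e k)) y +
      sgn ((par i + par j) * par k) • tmul (e k) (bracket (bk i j) y) := by
  obtain ⟨c, l, h, hl, -⟩ := bk_homogeneous i j
  rw [h, ← hl]
  simp only [map_smul, LinearMap.smul_apply, action_tmul_e_right, bracket_e_e, smul_add]
  rw [smul_comm]

lemma action_bk (i j : Idx) (v : V) : action (bk i j) v =
    action (e i) (action (e j) v) - sgn (par j * par i) • action (e j) (action (e i) v) := by
  suffices h : action (bk i j) = action (e i) ∘ₗ action (e j) -
      sgn (par j * par i) • (action (e j) ∘ₗ action (e i)) from LinearMap.congr_fun h v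
  refine V_hom_ext fun k l => ?_
  simp only [LinearMap.sub_apply, LinearMap.smul_apply, LinearMap.comp_apply, action_bk_tmul,
    action_tmul_e_right, map_add, map_smul, action_tmul_bk, bracket_bk, map_sub, bracket_e_e,
    mul_add, add_mul, sgn_add, mul_comm (par j) (par i)]
  have hs := sgn_mul_self (par i * par j)
  match_scalars <;> first | ring1 | linear_combination sgn (par j * par k) * hs

end Module

section Twist

/-- The super-twist `τ` of `𝓛 ⊗ 𝓛` as a linear map. -/
def twist : V →ₗ[ℂ] V :=
  Finsupp.linearCombination ℂ fun p => sgn (par p.1 * par p.2) • Finsupp.single p.swap 1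

lemma twist_tmul_e_e (i j : Idx) :
    twist (tmul (e i) (e j)) = sgn (par i * par j) • tmul (e j) (e i) := by
  simp [twist, tmul_e_e]

lemma twist_tmul_bk_e (i j k : Idx) :
    twist (tmul (bk i j) (e k)) = sgn ((par i + par j) * par k) • tmul (e k) (bk i j) := by
  obtain ⟨c, l, h, hl, -⟩ := bk_homogeneous i j
  simp only [h, ← hl, map_smul, LinearMap.smul_apply, twist_tmul_e_e]
  rw [smul_comm]

lemma twist_tmul_e_bk (i j k : Idx) :
    twist (tmul (e k) (bk i j)) = sgn (par k * (par i + par j)) • tmul (bk i j) (e k) := by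
  obtain ⟨c, l, h, hl, -⟩ := bk_homogeneous i j
  simp only [h, ← hl, map_smul, LinearMap.smul_apply, twist_tmul_e_e]
  rw [smul_comm]

lemma twist_apply (v : V) (i j : Idx) : twist v (i, j) = sgn (par i * par j) * v (j, i) := by
  induction v using Finsupp.induction_linear with
  | zero => simp
  | add v w hv hw => simp only [map_add, Finsupp.add_apply, hv, hw, mul_add]
  | single p c =>
    by_cases h : p = (j, i)
    · subst h
      simp [twist, mul_comm]
    · have h' : p.swap ≠ (i, j) := fun hp => h (Prod.swap_injective hp)
      simp [twist, h, h']

lemma twist_action (i : Idx) (v : V) : twist (action (e i) v) = action (e i) (twist v) := by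
  suffices h : twist ∘ₗ action (e i) = action (e i) ∘ₗ twist from LinearMap.congr_fun h v
  refine V_hom_ext fun j k => ?_
  simp only [LinearMap.comp_apply, action_tmul_e_e, twist_tmul_e_e, map_add, map_smul,
    twist_tmul_bk_e, twist_tmul_e_bk, add_mul, sgn_add, mul_comm (par j)]
  have hs := sgn_mul_self (par i * par j)
  match_scalars
  · ring
  · linear_combination sgn (par k * par j) * hs

lemma twist_mem_weightSpace {A : Type*} [AddCommMagma A] {δ : Idx → A} {a : A} {v : V}
    (hv : v ∈ weightSpace δ a) : twist v ∈ weightSpace δ a := by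
  refine mem_weightSpace.2 fun ⟨i, j⟩ hij => ?_
  rw [twist_apply] at hij
  rw [← mem_weightSpace.1 hv (j, i) (right_ne_zero_of_mul hij), add_comm]

end Twist

section Derivations

lemma isDegV_iff {ι : ℚ} {v : V} : IsDegV ι v ↔ v ∈ weightSpace qdeg ι := Iff.rfl

lemma innMap_zero_apply (u : V) (x : Lsa) : innMap 0 u x = action x u := by
  suffices h : innMap 0 u = action.flip u from LinearMap.congr_fun h x
  refine linearMap_ext_e fun i => ?_
  rw [innMap, ofBasis_e, zero_mul, sgn_zero, one_smul, act2_eq_action, LinearMap.flip_apply]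

lemma isDerOfParity_innMap {ε : ZMod 2} {u : V} (hu : IsParityV ε u) :
    IsDerOfParity ε (innMap ε u) := by
  refine ⟨fun i => ?_, fun i j => ?_⟩
  · rw [innMap, ofBasis_e, act2_eq_action]
    exact Submodule.smul_mem _ _ (action_mem_weightSpace_par i hu)
  · have innMap_bk : innMap ε u (bk i j) = sgn (ε * (par i + par j)) • action (bk i j) u := by
      obtain ⟨c, k, h, hk, -⟩ := bk_homogeneous i j
      rw [h, ← hk, map_smul, innMap, ofBasis_e, act2_eq_action, map_smul, LinearMap.smul_apply,
        smul_comm]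
    rw [innMap_bk, action_bk]
    simp only [innMap, ofBasis_e, act2_eq_action, map_smul, smul_sub, smul_smul, ← sgn_add]
    congr 3 <;> ring

lemma isDegHomogDer_innMap (ε : ZMod 2) {ι : ℚ} {u : V} (hu : IsDegV ι u) :
    IsDegHomogDer ι (innMap ε u) := fun i => by
  rw [innMap, ofBasis_e, act2_eq_action, add_comm]
  exact Submodule.smul_mem _ _ (action_mem_weightSpace_qdeg i hu)

variable {ε : ZMod 2} {ι : ℚ} {d d' : Lsa →ₗ[ℂ] V}

lemma IsDerOfParity.sub (hd : IsDerOfParity ε d) (hd' : IsDerOfParity ε d') :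
    IsDerOfParity ε (d - d') := by
  refine ⟨fun i => (weightSpace par _).sub_mem (hd.1 i) (hd'.1 i), fun i j => ?_⟩
  simp only [LinearMap.sub_apply, hd.2, hd'.2, act2_eq_action, map_sub, smul_sub]
  abel

lemma IsDegHomogDer.sub (hd : IsDegHomogDer ι d) (hd' : IsDegHomogDer ι d') :
    IsDegHomogDer ι (d - d') := fun i =>
  (weightSpace qdeg _).sub_mem (hd i) (hd' i)

lemma IsDerOfParity.twist_comp (hd : IsDerOfParity ε d) : IsDerOfParity ε (twist ∘ₗ d) := by
  refine ⟨fun i => twist_mem_weightSpace (hd.1 i), fun i j => ?_⟩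
  simp only [LinearMap.comp_apply, hd.2, act2_eq_action, map_sub, map_smul, twist_action]

lemma IsDegHomogDer.twist_comp (hd : IsDegHomogDer ι d) : IsDegHomogDer ι (twist ∘ₗ d) :=
  fun i => twist_mem_weightSpace (hd i)

lemma IsDerOfParity.map_bk_eq_zero (hd : IsDerOfParity ε d) {i j : Idx} (hi : d (e i) = 0)
    (hj : d (e j) = 0) : d (bk i j) = 0 := by
  rw [hd.2, hi, hj, act2_eq_action, act2_eq_action, map_zero, map_zero, smul_zero, smul_zero,
    sub_zero]

lemma IsDerOfParity.map_bk (hd : IsDerOfParity 0 d) (i j : Idx) : d (bk i j) =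
    action (e i) (d (e j)) - sgn (par j * par i) • action (e j) (d (e i)) := by
  simpa only [act2_eq_action, zero_mul, sgn_zero, one_smul, zero_add] using hd.2 i j

lemma IsDerOfParity.action_T_comm (hd : IsDerOfParity 0 d) (k l : ℤ) :
    action (e (.T k)) (d (e (.T l))) = action (e (.T l)) (d (e (.T k))) := by
  have h := hd.map_bk (.T k) (.T l)
  rwa [bk_T_T, map_zero, par, par, mul_zero, sgn_zero, one_smul, eq_comm, sub_eq_zero] at h

lemma IsDerOfParity.map_bk_L_T (hd : IsDerOfParity 0 d) (m k : ℤ) :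
    (-((k : ℂ) + 1 / 2)) • d (e (.T (k + m))) =
      action (e (.L m)) (d (e (.T k))) - action (e (.T k)) (d (e (.L m))) := by
  simpa only [bk_L_T, map_smul, par, mul_zero, sgn_zero, one_smul] using hd.map_bk (.L m) (.T k)

lemma IsDerOfParity.map_bk_T_G (hd : IsDerOfParity 0 d) (k n : ℤ) :
    d (e (.G (n + 2 * k + 1))) =
      action (e (.T k)) (d (e (.G n))) - action (e (.G n)) (d (e (.T k))) := by
  simpa only [bk_T_G, par, mul_zero, sgn_zero, one_smul] using hd.map_bk (.T k) (.G n)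

/-- The algebra is generated by the `T_r` and `G_0`. -/
lemma IsDerOfParity.eq_zero_of_T_of_G (hd : IsDerOfParity ε d) (hT : ∀ k, d (e (.T k)) = 0)
    (hG : d (e (.G 0)) = 0) : d = 0 := by
  have hG_succ {n : ℤ} (hn : d (e (.G n)) = 0) (k : ℤ) : d (e (.G (n + 2 * k + 1))) = 0 :=
    hd.map_bk_eq_zero (hT k) hn
  have hG_odd (k : ℤ) : d (e (.G (2 * k + 1))) = 0 := by
    simpa only [zero_add] using hG_succ hG k
  have hG_even (k : ℤ) : d (e (.G (2 * k))) = 0 := by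
    convert hG_succ (hG_odd 0) (k - 1) using 4
    ring
  refine linearMap_ext_e fun i => ?_
  induction i using Idx.parityCases with
  | hL m =>
    have h := hd.map_bk_eq_zero (hG_even 0) (hG_even m)
    rwa [bk_G_even_G_even, zero_add, map_smul, smul_eq_zero_iff_right two_ne_zero] at h
  | hT k => exact hT k
  | hG₀ n => exact hG_even n
  | hG₁ n => exact hG_odd n

end Derivations

section Coefficients

lemma action_apply {i x y q q' : Idx} {c c' : ℂ} (hx : ∀ p, bk i p x = e q p * c)
    (hy : ∀ p, bk i p y = e q' p * c') (v : V) :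
    action (e i) v (x, y) = c * v (q, y) + sgn (par i * par x) * (c' * v (x, q')) := by
  suffices h : Finsupp.lapply (x, y) ∘ₗ action (e i) = c • Finsupp.lapply (q, y) +
      sgn (par i * par x) • c' • Finsupp.lapply (x, q') from LinearMap.congr_fun h v
  refine V_hom_ext fun j k => ?_
  have hsgn : sgn (par i * par j) * e j x = sgn (par i * par x) * e j x := by
    by_cases h : j = x
    · rw [h]
    · simp [e, h]
  have symm (a b : Idx) : e a b = e b a := by simp only [e, Finsupp.single_apply, eq_comm]
  simp only [LinearMap.comp_apply, LinearMap.add_apply, LinearMap.smul_apply,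
    Finsupp.lapply_apply, action_tmul_e_e, Finsupp.add_apply, Finsupp.smul_apply, tmul_apply,
    smul_eq_mul, hx, hy, ← mul_assoc, hsgn, symm q, symm q']
  ring

lemma e_apply (i j : Idx) : e i j = if i = j then 1 else 0 := Finsupp.single_apply

lemma bk_T_apply_L (k a : ℤ) (p : Idx) : bk (.T k) p (.L a) = 0 := by
  cases p <;> simp [bk, e_apply]

lemma bk_T_apply_T (k a : ℤ) (p : Idx) :
    bk (.T k) p (.T a) = e (.L (a - k)) p * ((k : ℂ) + 1 / 2) := by
  cases p <;> grind [bk, e_apply, Finsupp.smul_apply, smul_eq_mul]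

lemma bk_T_apply_G (k a : ℤ) (p : Idx) :
    bk (.T k) p (.G a) = e (.G (a - 2 * k - 1)) p * 1 := by
  cases p <;> grind [bk, e_apply, Finsupp.smul_apply, smul_eq_mul]

lemma bk_L_apply_L (m a : ℤ) (p : Idx) :
    bk (.L m) p (.L a) = e (.L (a - m)) p * (2 * (m : ℂ) - a) := by
  obtain ⟨b, rfl⟩ : ∃ b, a = m + b := ⟨a - m, by ring⟩
  cases p <;> grind [bk, e_apply, Finsupp.smul_apply, smul_eq_mul]

lemma bk_L_apply_T (m a : ℤ) (p : Idx) :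
    bk (.L m) p (.T a) = e (.T (a - m)) p * ((m : ℂ) - a - 1 / 2) := by
  obtain ⟨b, rfl⟩ : ∃ b, a = b + m := ⟨a - m, by ring⟩
  cases p <;> grind [bk, e_apply, Finsupp.smul_apply, smul_eq_mul]

lemma bk_G_zero_G_even (n : ℤ) : bk (.G 0) (.G (2 * n)) = (2 : ℂ) • e (.L n) := by
  simpa only [mul_zero, zero_add] using bk_G_even_G_even 0 n

lemma bk_G_zero_G_odd (n : ℤ) : bk (.G 0) (.G (2 * n + 1)) = ((n : ℂ) + 1 / 2) • e (.T n) := by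
  simpa only [mul_zero, zero_add, Int.cast_zero, sub_zero] using bk_G_even_G_odd 0 n

lemma bk_G_zero_apply_T (a : ℤ) (p : Idx) :
    bk (.G 0) p (.T a) = e (.G (2 * a + 1)) p * ((a : ℂ) + 1 / 2) := by
  induction p using Idx.parityCases <;>
    grind [bk_G_L, bk_G_T, bk_G_zero_G_even, bk_G_zero_G_odd, e_apply, Finsupp.smul_apply,
      Finsupp.neg_apply, smul_eq_mul]

lemma bk_G_zero_apply_G_odd (a : ℤ) (p : Idx) :
    bk (.G 0) p (.G (2 * a + 1)) = e (.T a) p * (-1) := by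
  induction p using Idx.parityCases <;>
    grind [bk_G_L, bk_G_T, bk_G_zero_G_even, bk_G_zero_G_odd, e_apply, Finsupp.smul_apply,
      Finsupp.neg_apply, smul_eq_mul]

lemma action_T_apply_T_T (k a b : ℤ) (v : V) : action (e (.T k)) v (.T a, .T b) =
    ((k : ℂ) + 1 / 2) * (v (.L (a - k), .T b) + v (.T a, .L (b - k))) := by
  rw [action_apply (bk_T_apply_T k a) (bk_T_apply_T k b), par, zero_mul, sgn_zero]
  ring

lemma action_T_apply_L (k a : ℤ) {y q : Idx} {c : ℂ} (hy : ∀ p, bk (.T k) p y = e q p * c)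
    (v : V) : action (e (.T k)) v (.L a, y) = c * v (.L a, q) := by
  have hx (p : Idx) : bk (.T k) p (.L a) = e (.L a) p * 0 := by rw [bk_T_apply_L, mul_zero]
  rw [action_apply hx hy, par, par, mul_zero, sgn_zero, zero_mul, zero_add, one_mul]

lemma action_T_apply_T_L (k a b : ℤ) (v : V) : action (e (.T k)) v (.T a, .L b) =
    ((k : ℂ) + 1 / 2) * v (.L (a - k), .L b) := by
  have hy (p : Idx) : bk (.T k) p (.L b) = e (.L b) p * 0 := by rw [bk_T_apply_L, mul_zero]
  rw [action_apply (bk_T_apply_T k a) hy, zero_mul, mul_zero, add_zero]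

lemma action_T_apply_L_T (k a b : ℤ) (v : V) : action (e (.T k)) v (.L a, .T b) =
    ((k : ℂ) + 1 / 2) * v (.L a, .L (b - k)) :=
  action_T_apply_L k a (bk_T_apply_T k b) v

lemma action_T_apply_L_G (k a b : ℤ) (v : V) : action (e (.T k)) v (.L a, .G b) =
    v (.L a, .G (b - 2 * k - 1)) :=
  (action_T_apply_L k a (bk_T_apply_G k b) v).trans (one_mul _)

lemma action_T_apply_T_G (k a b : ℤ) (v : V) : action (e (.T k)) v (.T a, .G b) =
    ((k : ℂ) + 1 / 2) * v (.L (a - k), .G b) + v (.T a, .G (b - 2 * k - 1)) := by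
  rw [action_apply (bk_T_apply_T k a) (bk_T_apply_G k b), par, zero_mul, sgn_zero, one_mul,
    one_mul]

lemma action_T_apply_G_G (k a b : ℤ) (v : V) : action (e (.T k)) v (.G a, .G b) =
    v (.G (a - 2 * k - 1), .G b) + v (.G a, .G (b - 2 * k - 1)) := by
  rw [action_apply (bk_T_apply_G k a) (bk_T_apply_G k b), par, zero_mul, sgn_zero, one_mul,
    one_mul, one_mul]

lemma action_L_apply_L_T (m a b : ℤ) (v : V) : action (e (.L m)) v (.L a, .T b) =
    (2 * (m : ℂ) - a) * v (.L (a - m), .T b) + ((m : ℂ) - b - 1 / 2) * v (.L a, .T (b - m)) := by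
  rw [action_apply (bk_L_apply_L m a) (bk_L_apply_T m b), par, zero_mul, sgn_zero, one_mul]

lemma action_G_zero_apply_G_G (a b : ℤ) (v : V) :
    action (e (.G 0)) v (.G (2 * a + 1), .G (2 * b + 1)) =
      v (.G (2 * a + 1), .T b) - v (.T a, .G (2 * b + 1)) := by
  rw [action_apply (bk_G_zero_apply_G_odd a) (bk_G_zero_apply_G_odd b), par, par, one_mul, sgn_one]
  ring

lemma action_G_zero_apply_T_G (a b : ℤ) (v : V) :
    action (e (.G 0)) v (.T a, .G (2 * b + 1)) =
      ((a : ℂ) + 1 / 2) * v (.G (2 * a + 1), .G (2 * b + 1)) - v (.T a, .T b) := by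
  rw [action_apply (bk_G_zero_apply_T a) (bk_G_zero_apply_G_odd b), par, par, mul_zero, sgn_zero]
  ring

end Coefficients

section FiniteSupport

open Filter

variable {M : Type*} [Zero M]

lemma eq_zero_of_succ_eq_zero_imp {f : ℤ → M} (hf : ∀ᶠ n in cofinite, f n = 0)
    (h : ∀ n, f (n + 1) = 0 → f n = 0) (n : ℤ) : f n = 0 := by
  by_contra hn
  obtain ⟨m, hm⟩ := Set.Finite.exists_maximal (eventually_cofinite.1 hf) ⟨n, hn⟩
  exact hm.prop (h m (not_not.1 fun hm' => (lt_add_one m).not_ge (hm.2 hm' (lt_add_one m).le)))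

lemma eventually_apply_eq_zero {α β : Type*} (v : α →₀ M) {g : β → α} (hg : g.Injective) :
    ∀ᶠ n in cofinite, v (g n) = 0 :=
  hg.tendsto_cofinite.eventually (eventually_cofinite.2 v.hasFiniteSupport)

lemma intCast_add_half_ne_zero (a : ℤ) : (a : ℂ) + 1 / 2 ≠ 0 := by
  intro h
  have h' : ((2 * a + 1 : ℤ) : ℂ) = 0 := by push_cast; linear_combination 2 * h
  have := Int.cast_eq_zero.1 h'
  omega

/-- `1 + X` divides every Laurent polynomial that vanishes at `-1`. -/
lemma exists_add_shift_eq (f : ℤ →₀ ℂ)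
    (hf : Finsupp.linearCombination ℂ (fun n : ℤ => (-1 : ℂ) ^ n) f = 0) :
    ∃ c : ℤ →₀ ℂ, ∀ n, f n = c n + c (n - 1) := by
  let mulOneAddX : (ℤ →₀ ℂ) →ₗ[ℂ] ℤ →₀ ℂ :=
    LinearMap.id + Finsupp.lmapDomain ℂ ℂ (· + 1)
  let π := (LinearMap.range mulOneAddX).mkQ
  have hperiodic : Function.Periodic (fun n : ℤ => (-1 : ℂ) ^ n • π (Finsupp.single n 1)) 1 := by
    intro n
    have h : π (Finsupp.single n 1 + Finsupp.single (n + 1) 1) = 0 := by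
      rw [Submodule.mkQ_apply, Submodule.Quotient.mk_eq_zero]
      exact ⟨Finsupp.single n 1, by simp [mulOneAddX]⟩
    rw [map_add, add_comm, add_eq_zero_iff_eq_neg] at h
    simp only [zpow_add_one₀ (neg_ne_zero.2 (one_ne_zero (α := ℂ))), h, mul_neg_one, neg_smul,
      smul_neg, neg_neg]
  have hπ (n : ℤ) : π (Finsupp.single n 1) = (-1 : ℂ) ^ n • π (Finsupp.single 0 1) := by
    have h := hperiodic.int_mul_eq n
    simp only [Int.cast_id, mul_one, zpow_zero, one_smul] at h
    rw [← h, smul_smul, ← mul_zpow, neg_one_mul, neg_neg, one_zpow, one_smul]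
  have heval : π = (LinearMap.toSpanSingleton ℂ _ (π (Finsupp.single 0 1))) ∘ₗ
      Finsupp.linearCombination ℂ (fun n : ℤ => (-1 : ℂ) ^ n) := by
    refine Finsupp.lhom_ext' fun n => LinearMap.ext_ring ?_
    simp [hπ n]
  have hmem : π f = 0 := by
    rw [heval, LinearMap.comp_apply, hf, map_zero]
  obtain ⟨c, rfl⟩ := (Submodule.Quotient.mk_eq_zero _).1 hmem
  refine ⟨c, fun n => ?_⟩
  have h := Finsupp.mapDomain_apply (add_left_injective (1 : ℤ)) c (n - 1)
  rw [sub_add_cancel] at h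
  simp [mulOneAddX, h]

end FiniteSupport

section LTCoefficients

open Filter

/-- The coefficient of `L_i ⊗ T_{k+1/2-i}` in `d(T_{k+1/2})`, divided by `k + 1/2`: for
`d = innMap 0 u` it is the coefficient of `L_i ⊗ L_{-i}` in `u`. -/
def LTcoeff (d : Lsa →ₗ[ℂ] V) (k i : ℤ) : ℂ :=
  d (e (.T k)) (.L i, .T (k - i)) / ((k : ℂ) + 1 / 2)

variable {d : Lsa →ₗ[ℂ] V}

lemma map_T_apply_L_T (d : Lsa →ₗ[ℂ] V) (k i : ℤ) :
    d (e (.T k)) (.L i, .T (k - i)) = ((k : ℂ) + 1 / 2) * LTcoeff d k i :=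
  (mul_div_cancel₀ _ (intCast_add_half_ne_zero k)).symm

lemma map_T_apply_T_L (d : Lsa →ₗ[ℂ] V) (k i : ℤ) :
    d (e (.T k)) (.T (k - i), .L i) = ((k : ℂ) + 1 / 2) * LTcoeff (twist ∘ₗ d) k i := by
  rw [← map_T_apply_L_T, LinearMap.comp_apply, twist_apply, par, zero_mul, sgn_zero, one_mul]

lemma LTcoeff_eventually_eq_zero (d : Lsa →ₗ[ℂ] V) (k : ℤ) :
    ∀ᶠ i in cofinite, LTcoeff d k i = 0 := by
  have hinj : Function.Injective fun i : ℤ => (Idx.L i, Idx.T (k - i)) := fun i j h => by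
    simpa using congrArg Prod.fst h
  filter_upwards [eventually_apply_eq_zero (d (e (.T k))) hinj] with i hi
  rw [LTcoeff, hi, zero_div]

lemma action_T_map_T_apply_T_T (d : Lsa →ₗ[ℂ] V) (k l a : ℤ) :
    action (e (.T k)) (d (e (.T l))) (.T a, .T (k + l - a)) = ((k : ℂ) + 1 / 2) *
      (((l : ℂ) + 1 / 2) * (LTcoeff d l (a - k) + LTcoeff (twist ∘ₗ d) l (l - a))) := by
  rw [action_T_apply_T_T, mul_add ((l : ℂ) + 1 / 2), ← map_T_apply_L_T, ← map_T_apply_T_L]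
  ring_nf

lemma LTcoeff_cocycle (hd : IsDerOfParity 0 d) (k l a : ℤ) :
    LTcoeff d l (a - k) + LTcoeff (twist ∘ₗ d) l (l - a) =
      LTcoeff d k (a - l) + LTcoeff (twist ∘ₗ d) k (k - a) := by
  have h := DFunLike.congr_fun (hd.action_T_comm k l) (.T a, .T (k + l - a))
  rw [action_T_map_T_apply_T_T, add_comm k l, action_T_map_T_apply_T_T, mul_left_comm] at h
  exact mul_left_cancel₀ (intCast_add_half_ne_zero k)
    (mul_left_cancel₀ (intCast_add_half_ne_zero l) h)

lemma LTcoeff_recurrence (hd : IsDerOfParity 0 d) (k i : ℤ) :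
    ((k : ℂ) + 3 / 2) * LTcoeff d (k + 1) i =
      ((i : ℂ) - 2) * LTcoeff d k (i - 1) + ((k : ℂ) + 1 / 2 - i) * LTcoeff d k i +
        d (e (.L 1)) (.L i, .L (1 - i)) := by
  have h := DFunLike.congr_fun (hd.map_bk_L_T 1 k) (.L i, .T (k + 1 - i))
  rw [Finsupp.smul_apply, Finsupp.sub_apply, action_L_apply_L_T, action_T_apply_L_T,
    map_T_apply_L_T, show k + 1 - i = k - (i - 1) by ring, map_T_apply_L_T,
    show k - (i - 1) - 1 = k - i by ring, map_T_apply_L_T,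
    show k - (i - 1) - k = 1 - i by ring] at h
  refine mul_left_cancel₀ (intCast_add_half_ne_zero k) ?_
  push_cast at h
  linear_combination (norm := (simp only [smul_eq_mul]; ring)) -h

lemma LTcoeff_sub_succ (hd : IsDerOfParity 0 d) (k i : ℤ) :
    LTcoeff d k i - LTcoeff d (k + 1) i =
      LTcoeff d (k + 1) (i + 1) - LTcoeff d (k + 2) (i + 1) := by
  have hB (m s : ℤ) : ∀ᶠ t in cofinite, LTcoeff (twist ∘ₗ d) m (t + s) = 0 :=
    (add_left_injective s).tendsto_cofinite.eventually (LTcoeff_eventually_eq_zero _ m)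
  obtain ⟨t, h₁, h₂, h₃, h₄⟩ :=
    ((hB k 0).and ((hB (k + 1) 0).and ((hB (k + 1) 1).and (hB (k + 2) 1)))).exists
  have e₁ := LTcoeff_cocycle hd k (k - i - t) (k - t)
  have e₂ := LTcoeff_cocycle hd (k + 1) (k - i - t) (k - t)
  have e₃ := LTcoeff_cocycle hd (k + 1) (k - i - t) (k + 1 - t)
  have e₄ := LTcoeff_cocycle hd (k + 2) (k - i - t) (k + 1 - t)
  ring_nf at h₁ h₂ h₃ h₄ e₁ e₂ e₃ e₄ ⊢
  linear_combination e₂ + e₃ - e₁ - e₄ - h₁ + h₂ + h₃ - h₄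

lemma LTcoeff_succ (hd : IsDerOfParity 0 d) (k i : ℤ) : LTcoeff d (k + 1) i = LTcoeff d k i := by
  suffices h : ∀ n, LTcoeff d k n - LTcoeff d (k + 1) n = 0 from (sub_eq_zero.1 (h i)).symm
  refine eq_zero_of_succ_eq_zero_imp ?_ fun n hn => ?_
  · filter_upwards [LTcoeff_eventually_eq_zero d k, LTcoeff_eventually_eq_zero d (k + 1)] with
      n h h'
    rw [h, h', sub_zero]
  · have h := LTcoeff_sub_succ hd k n
    have r := LTcoeff_recurrence hd k (n + 1)
    have r' := LTcoeff_recurrence hd (k + 1) (n + 1)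
    have hne := intCast_add_half_ne_zero (k - n + 3)
    refine (mul_eq_zero.1 ?_).resolve_left hne
    rw [add_sub_cancel_right, add_assoc, one_add_one_eq_two] at r'
    rw [add_sub_cancel_right] at r
    push_cast at r r' ⊢
    linear_combination r - r' + ((k : ℂ) + 5 / 2) * h + ((k : ℂ) - n - 1 / 2) * hn

lemma LTcoeff_eq (hd : IsDerOfParity 0 d) (k i : ℤ) : LTcoeff d k i = LTcoeff d 0 i := by
  have h : Function.Periodic (LTcoeff d · i) 1 := fun k => LTcoeff_succ hd k i
  simpa only [Int.cast_id, mul_one] using h.int_mul_eq k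

lemma LTcoeff_twist_comp (hd : IsDerOfParity 0 d) (i : ℤ) :
    LTcoeff (twist ∘ₗ d) 0 i = LTcoeff d 0 (-i) := by
  refine sub_eq_zero.1 <| eq_zero_of_succ_eq_zero_imp
    (f := fun n => LTcoeff (twist ∘ₗ d) 0 n - LTcoeff d 0 (-n)) ?_ (fun n hn => ?_) i
  · filter_upwards [LTcoeff_eventually_eq_zero (twist ∘ₗ d) 0,
      neg_injective.tendsto_cofinite.eventually (LTcoeff_eventually_eq_zero d 0)] with n h h'
    rw [h, h', sub_zero]
  · have h := LTcoeff_cocycle hd 0 1 (-n)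
    rw [LTcoeff_eq hd 1, LTcoeff_eq hd.twist_comp 1, sub_zero, sub_neg_eq_add, zero_sub, neg_neg,
      add_comm 1 n, ← neg_add'] at h
    linear_combination hn - h

end LTCoefficients

section AlternatingForm

lemma eq_of_mem_weightSpace {A M : Type*} [Add A] [AddCommMonoid M] [Module ℂ M] {δ : Idx → A}
    {a : A} {v : V} (hv : v ∈ weightSpace δ a) {f g : V →ₗ[ℂ] M}
    (h : ∀ i j, δ i + δ j = a → f (tmul (e i) (e j)) = g (tmul (e i) (e j))) : f v = g v := by
  suffices h' : weightSpace δ a ≤ LinearMap.eqLocus f g from h' hv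
  rw [weightSpace, Finsupp.supported_eq_span_single, Submodule.span_le]
  rintro _ ⟨⟨i, j⟩, hij, rfl⟩
  have hfg := h i j hij
  rwa [tmul_e_e] at hfg

/-- The linear form on `𝓛` that vanishes on `𝓛_0̄` and evaluates at `z` the odd part, read as a
Laurent polynomial with `G_{n/2}` in the role of the monomial of exponent `n`. -/
def oddEval (z : ℂ) : Lsa →ₗ[ℂ] ℂ :=
  ofBasis fun
    | .G n => z ^ n
    | _ => 0

lemma oddEval_L (z : ℂ) (m : ℤ) : oddEval z (e (.L m)) = 0 := ofBasis_e _ _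

lemma oddEval_T (z : ℂ) (k : ℤ) : oddEval z (e (.T k)) = 0 := ofBasis_e _ _

lemma oddEval_G (z : ℂ) (n : ℤ) : oddEval z (e (.G n)) = z ^ n := ofBasis_e _ _

lemma oddEval_bk_T {z : ℂ} (hz : z * z = 1) (k : ℤ) (i : Idx) :
    oddEval z (bk (.T k) i) = z * oddEval z (e i) := by
  have hz₀ : z ≠ 0 := left_ne_zero_of_mul_eq_one hz
  rcases i with m | l | n
  · rw [bk_T_L, map_smul, oddEval_T, oddEval_L, smul_zero, mul_zero]
  · rw [bk_T_T, map_zero, oddEval_T, mul_zero]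
  · rw [bk_T_G, oddEval_G, oddEval_G, zpow_add_one₀ hz₀, zpow_add₀ hz₀, zpow_mul, zpow_two, hz,
      one_zpow, mul_one, mul_comm]

lemma oddEval_bk_L {z : ℂ} (hz : z * z = 1) (m : ℤ) (i : Idx) :
    oddEval z (bk (.L m) i) = ((m : ℂ) / 2 - qdeg i) * oddEval z (e i) := by
  have hz₀ : z ≠ 0 := left_ne_zero_of_mul_eq_one hz
  rcases i with n | k | n
  · rw [bk_L_L, map_smul, oddEval_L, oddEval_L, smul_zero, mul_zero]
  · rw [bk_L_T, map_smul, oddEval_T, oddEval_T, smul_zero, mul_zero]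
  · rw [bk_L_G, map_smul, oddEval_G, oddEval_G, zpow_add₀ hz₀, zpow_mul, zpow_two, hz, one_zpow,
      mul_one, smul_eq_mul, qdeg, Rat.cast_div, Rat.cast_intCast, Rat.cast_ofNat, sub_div]

/-- The linear form on `𝓛 ⊗ 𝓛` sending `G_{m/2} ⊗ G_{n/2}` to `(-1)^m` and vanishing on the other
basis tensors; it is the obstruction to lying in the image of `T_{1/2}`. -/
def altForm : V →ₗ[ℂ] ℂ :=
  LinearMap.mul' ℂ ℂ ∘ₗ TensorProduct.map (oddEval (-1)) (oddEval 1) ∘ₗ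
    (finsuppTensorFinsupp' ℂ Idx Idx).symm.toLinearMap

lemma altForm_tmul (x y : Lsa) : altForm (tmul x y) = oddEval (-1) x * oddEval 1 y := by
  simp [altForm, tmul]

lemma altForm_action_T (k : ℤ) (v : V) : altForm (action (e (.T k)) v) = 0 := by
  suffices h : altForm ∘ₗ action (e (.T k)) = 0 from LinearMap.congr_fun h v
  refine V_hom_ext fun i j => ?_
  rw [LinearMap.comp_apply, action_tmul_e_e, LinearMap.zero_apply, map_add, map_smul, altForm_tmul,
    altForm_tmul, oddEval_bk_T (by norm_num), oddEval_bk_T (by norm_num), par, zero_mul, sgn_zero,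
    one_smul]
  ring

lemma altForm_action_L (m : ℤ) {s : ℚ} {v : V} (hv : v ∈ weightSpace qdeg s) :
    altForm (action (e (.L m)) v) = ((m : ℂ) - s) * altForm v := by
  refine eq_of_mem_weightSpace hv (f := altForm ∘ₗ action (e (.L m))) (g := ((m : ℂ) - s) • altForm)
    fun i j hij => ?_
  rw [LinearMap.comp_apply, action_tmul_e_e, LinearMap.smul_apply, map_add, map_smul, altForm_tmul,
    altForm_tmul, altForm_tmul, oddEval_bk_L (by norm_num), oddEval_bk_L (by norm_num), par,
    zero_mul, sgn_zero, one_smul, ← hij, smul_eq_mul]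
  push_cast
  ring

lemma G_G_injective (s : ℤ) : Function.Injective fun n : ℤ => (Idx.G n, Idx.G (s - n)) :=
  fun m n h => by simpa using congrArg Prod.fst h

lemma altForm_eq_linearCombination {s : ℤ} {v : V} (hv : v ∈ weightSpace qdeg ((s : ℚ) / 2)) :
    altForm v = Finsupp.linearCombination ℂ (fun n : ℤ => (-1 : ℂ) ^ n)
      (Finsupp.comapDomain (fun n : ℤ => (Idx.G n, Idx.G (s - n))) v (G_G_injective s).injOn) := by
  refine eq_of_mem_weightSpace hv (f := altForm) (g := Finsupp.linearCombination ℂ _ ∘ₗ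
    Finsupp.lcomapDomain _ (G_G_injective s)) fun i j hij => ?_
  rw [altForm_tmul, tmul_e_e, LinearMap.comp_apply, Finsupp.lcomapDomain_apply]
  by_cases h : ∃ m n, i = .G m ∧ j = .G n
  · obtain ⟨m, n, rfl, rfl⟩ := h
    have hn : n = s - m := by
      simp only [qdeg] at hij
      have : (n : ℚ) = ((s - m : ℤ) : ℚ) := by push_cast; linarith
      exact mod_cast this
    subst hn
    rw [Finsupp.comapDomain_single (fun n : ℤ => (Idx.G n, Idx.G (s - n))), oddEval_G, oddEval_G,
      one_zpow, Finsupp.linearCombination_single, smul_eq_mul, mul_comm]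
  · have hcomap : Finsupp.comapDomain (fun n : ℤ => (Idx.G n, Idx.G (s - n)))
        (Finsupp.single (i, j) (1 : ℂ)) (G_G_injective s).injOn = 0 := by
      ext n
      refine (Finsupp.comapDomain_apply ..).trans (Finsupp.single_eq_of_ne fun hn => h ?_)
      obtain ⟨rfl, rfl⟩ := Prod.mk.inj hn
      exact ⟨n, s - n, rfl, rfl⟩
    have heval : oddEval (-1) (e i) * oddEval 1 (e j) = 0 := by
      rcases i with m | k | m
      · rw [oddEval_L, zero_mul]
      · rw [oddEval_T, zero_mul]
      · rcases j with n | l | n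
        · rw [oddEval_L, mul_zero]
        · rw [oddEval_T, mul_zero]
        · exact (h ⟨m, n, rfl, rfl⟩).elim
    rw [hcomap, map_zero, heval]

/-- In the `G ⊗ G` part of `V`, the `T_r` act by translations, so `d(T_{1/2})` is reached from
`V_0` as soon as the alternating sum of its coefficients vanishes; the `L_m` force it to. -/
lemma altForm_map_T_zero {d : Lsa →ₗ[ℂ] V} (hd : IsDerOfParity 0 d) (hdeg : IsDegHomogDer 0 d) :
    altForm (d (e (.T 0))) = 0 := by
  have h (m k : ℤ) : -((k : ℂ) + 1 / 2) * altForm (d (e (.T (k + m)))) =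
      ((m : ℂ) - (k + 1 / 2)) * altForm (d (e (.T k))) := by
    have h := congrArg altForm (hd.map_bk_L_T m k)
    rw [map_smul, map_sub, altForm_action_T, altForm_action_L m (hdeg _), sub_zero] at h
    simpa [qdeg] using h
  have h₁ := h 1 0
  have h₂ := h (-1) 1
  rw [zero_add] at h₁
  rw [add_neg_cancel] at h₂
  push_cast at h₁ h₂
  linear_combination -(5 / 4 : ℂ) * h₁ - (1 / 4 : ℂ) * h₂

lemma exists_map_T_zero_apply_G_G {d : Lsa →ₗ[ℂ] V} (hd : IsDerOfParity 0 d)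
    (hdeg : IsDegHomogDer 0 d) :
    ∃ c : ℤ →₀ ℂ, ∀ n, d (e (.T 0)) (.G n, .G (1 - n)) = c n + c (n - 1) := by
  have hv : d (e (.T 0)) ∈ weightSpace qdeg (((1 : ℤ) : ℚ) / 2) := by
    simpa [qdeg] using isDegV_iff.1 (hdeg (.T 0))
  have h := altForm_map_T_zero hd hdeg
  rw [altForm_eq_linearCombination hv] at h
  exact exists_add_shift_eq _ h

end AlternatingForm

section VanishingOnT

lemma mapDomain_mem_weightSpace {A ι : Type*} [Add A] {δ : Idx → A} {a : A} {f : ι → Idx × Idx}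
    (hf : ∀ n, δ (f n).1 + δ (f n).2 = a) (c : ι →₀ ℂ) :
    Finsupp.mapDomain f c ∈ weightSpace δ a := by
  refine mem_weightSpace.2 fun p hp => ?_
  obtain ⟨n, rfl⟩ := not_imp_comm.1 (Finsupp.mapDomain_of_notMem_range c p) hp
  exact hf n

/-- The vector `∑ aᵢ L_i ⊗ L_{-i} + ∑ cₙ G_{n/2} ⊗ G_{-n/2}` of `V_0`; the value of a derivation at
`T_{1/2}` is matched by the action on such a vector. -/
def diagonalVector (a c : ℤ →₀ ℂ) : V :=
  Finsupp.mapDomain (fun i => (.L i, .L (-i))) a + Finsupp.mapDomain (fun n => (.G n, .G (-n))) c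

lemma diagonalVector_mem_weightSpace_par (a c : ℤ →₀ ℂ) :
    diagonalVector a c ∈ weightSpace par 0 :=
  add_mem (mapDomain_mem_weightSpace (fun _ => CharTwo.add_self_eq_zero _) a)
    (mapDomain_mem_weightSpace (fun _ => CharTwo.add_self_eq_zero _) c)

lemma diagonalVector_mem_weightSpace_qdeg (a c : ℤ →₀ ℂ) :
    diagonalVector a c ∈ weightSpace qdeg 0 := by
  refine add_mem (mapDomain_mem_weightSpace (fun i => ?_) a)
    (mapDomain_mem_weightSpace (fun n => ?_) c) <;>
  · simp only [qdeg]
    push_cast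
    ring

lemma diagonalVector_apply_L_L (a c : ℤ →₀ ℂ) (i : ℤ) :
    diagonalVector a c (.L i, .L (-i)) = a i := by
  have hinj : Function.Injective fun i : ℤ => (Idx.L i, Idx.L (-i)) := fun i j h => by
    simpa using congrArg Prod.fst h
  rw [diagonalVector, Finsupp.add_apply, Finsupp.mapDomain_of_notMem_range c _ (by simp), add_zero]
  exact Finsupp.mapDomain_apply hinj a i

lemma diagonalVector_apply_G_G (a c : ℤ →₀ ℂ) (n : ℤ) :
    diagonalVector a c (.G n, .G (-n)) = c n := by
  have hinj : Function.Injective fun n : ℤ => (Idx.G n, Idx.G (-n)) := fun i j h => by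
    simpa using congrArg Prod.fst h
  rw [diagonalVector, Finsupp.add_apply, Finsupp.mapDomain_of_notMem_range a _ (by simp), zero_add]
  exact Finsupp.mapDomain_apply hinj c n

lemma eq_zero_of_even_of_half_integer {k : ℤ} {v : V} (hpar : v ∈ weightSpace par 0)
    (hdeg : v ∈ weightSpace qdeg ((k : ℚ) + 1 / 2)) (hLT : ∀ i, v (.L i, .T (k - i)) = 0)
    (hTL : ∀ i, v (.T (k - i), .L i) = 0) (hGG : ∀ n, v (.G n, .G (2 * k + 1 - n)) = 0) :
    v = 0 := by
  ext ⟨i, j⟩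
  by_contra h
  have hpar' := mem_weightSpace.1 hpar _ h
  have hdeg' := mem_weightSpace.1 hdeg _ h
  rcases i with a | a | a <;> rcases j with b | b | b <;>
    simp only [par, qdeg, add_zero, zero_add, one_ne_zero] at hpar' hdeg'
  · have : 2 * (a + b) = 2 * k + 1 := by qify; linarith
    omega
  · obtain rfl : b = k - a := by qify; linarith
    exact h (hLT a)
  · obtain rfl : a = k - b := by qify; linarith
    exact h (hTL b)
  · have : 2 * (a + b + 1) = 2 * k + 1 := by qify; linarith
    omega
  · obtain rfl : b = 2 * k + 1 - a := by qify; linarith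
    exact h (hGG a)

lemma apply_G_G_eq_zero_of_action_T_zero {v : V} (h : action (e (.T 0)) v = 0) (a b : ℤ) :
    v (.G a, .G b) = 0 := by
  have hinj : Function.Injective fun n : ℤ => (Idx.G (a + n), Idx.G (b - n)) := fun m n h => by
    simpa using congrArg Prod.fst h
  have hzero (n : ℤ) : v (.G (a + n), .G (b - n)) = 0 :=
    eq_zero_of_succ_eq_zero_imp (f := fun n => v (.G (a + n), .G (b - n)))
      (eventually_apply_eq_zero v hinj) (fun n hn => by
        have h' := DFunLike.congr_fun h (.G (a + n + 1), .G (b - n))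
        rw [action_T_apply_G_G, mul_zero, sub_zero, sub_zero, add_sub_cancel_right, sub_sub,
          add_assoc, hn, add_zero] at h'
        exact h') n
  simpa only [add_zero, sub_zero] using hzero 0

lemma IsDegHomogDer.map_T_mem_weightSpace {d : Lsa →ₗ[ℂ] V} (hdeg : IsDegHomogDer 0 d) (k : ℤ) :
    d (e (.T k)) ∈ weightSpace qdeg ((k : ℚ) + 1 / 2) := by
  have h := isDegV_iff.1 (hdeg (.T k))
  rwa [zero_add] at h

lemma map_T_eq_zero {d : Lsa →ₗ[ℂ] V} (hd : IsDerOfParity 0 d) (hdeg : IsDegHomogDer 0 d)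
    (h₀ : d (e (.T 0)) = 0) (k : ℤ) : d (e (.T k)) = 0 := by
  have hLT (i : ℤ) : LTcoeff d 0 i = 0 := by rw [LTcoeff, h₀, Finsupp.zero_apply, zero_div]
  refine eq_zero_of_even_of_half_integer (hd.1 (.T k)) (hdeg.map_T_mem_weightSpace k)
    (fun i => ?_) (fun i => ?_) fun n => ?_
  · rw [map_T_apply_L_T, LTcoeff_eq hd, hLT, mul_zero]
  · rw [map_T_apply_T_L, LTcoeff_eq hd.twist_comp, LTcoeff_twist_comp hd, hLT, mul_zero]
  · refine apply_G_G_eq_zero_of_action_T_zero ?_ _ _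
    rw [hd.action_T_comm, h₀, map_zero]

lemma exists_map_T_zero_eq_action {d : Lsa →ₗ[ℂ] V} (hd : IsDerOfParity 0 d)
    (hdeg : IsDegHomogDer 0 d) :
    ∃ u : V, IsEvenV u ∧ IsDegV 0 u ∧ d (e (.T 0)) = action (e (.T 0)) u := by
  obtain ⟨c, hc⟩ := exists_map_T_zero_apply_G_G hd hdeg
  let a : ℤ →₀ ℂ := Finsupp.ofSupportFinite (LTcoeff d 0) (LTcoeff_eventually_eq_zero d 0)
  have ha (i : ℤ) : a i = LTcoeff d 0 i := rfl
  let u := diagonalVector a c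
  have hpar : IsEvenV u := diagonalVector_mem_weightSpace_par a c
  have hdeg₀ : IsDegV 0 u := diagonalVector_mem_weightSpace_qdeg a c
  refine ⟨u, hpar, hdeg₀, ?_⟩
  have hd' := (hd.sub (isDerOfParity_innMap hpar)).1 (.T 0)
  have hdeg' := (hdeg.sub (isDegHomogDer_innMap 0 hdeg₀)).map_T_mem_weightSpace 0
  rw [LinearMap.sub_apply, innMap_zero_apply] at hd' hdeg'
  refine sub_eq_zero.1 <| eq_zero_of_even_of_half_integer hd' hdeg'
    (fun i => ?_) (fun i => ?_) fun n => ?_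
  · rw [Finsupp.sub_apply, map_T_apply_L_T, action_T_apply_L_T, sub_zero, zero_sub,
      diagonalVector_apply_L_L, ha, sub_self]
  · have hu : u (.L (-i), .L i) = LTcoeff d 0 (-i) := by
      rw [← ha, ← diagonalVector_apply_L_L a c, neg_neg]
    rw [Finsupp.sub_apply, map_T_apply_T_L, action_T_apply_T_L, sub_zero, zero_sub, hu,
      LTcoeff_twist_comp hd, sub_self]
  · have hu : u (.G (n - 1), .G (1 - n)) = c (n - 1) := by
      simpa only [neg_sub] using diagonalVector_apply_G_G a c (n - 1)
    rw [Finsupp.sub_apply, action_T_apply_G_G, mul_zero, zero_add, sub_zero, sub_zero, hu,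
      sub_sub_cancel_left, diagonalVector_apply_G_G, hc, add_comm, sub_self]

lemma exists_sub_innMap_map_T_eq_zero {d : Lsa →ₗ[ℂ] V} (hd : IsDerOfParity 0 d)
    (hdeg : IsDegHomogDer 0 d) :
    ∃ u : V, IsEvenV u ∧ IsDegV 0 u ∧ ∀ k, (d - innMap 0 u) (e (.T k)) = 0 := by
  obtain ⟨u, hpar, hdeg₀, hu⟩ := exists_map_T_zero_eq_action hd hdeg
  refine ⟨u, hpar, hdeg₀, map_T_eq_zero (hd.sub (isDerOfParity_innMap hpar))
    (hdeg.sub (isDegHomogDer_innMap 0 hdeg₀)) ?_⟩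
  rw [LinearMap.sub_apply, innMap_zero_apply, hu, sub_self]

end VanishingOnT

section VanishingOnG

open Filter

variable {d : Lsa →ₗ[ℂ] V}

lemma eq_zero_of_odd_of_degree_zero {v : V} (hpar : v ∈ weightSpace par 1)
    (hdeg : v ∈ weightSpace qdeg 0) (hLG : ∀ a b, v (.L a, .G b) = 0)
    (hGL : ∀ a b, v (.G b, .L a) = 0) (hTG : ∀ a, v (.T a, .G (2 * (-a - 1) + 1)) = 0)
    (hGT : ∀ a, v (.G (2 * a + 1), .T (-a - 1)) = 0) : v = 0 := by
  ext ⟨i, j⟩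
  by_contra h
  have hpar' := mem_weightSpace.1 hpar _ h
  have hdeg' := mem_weightSpace.1 hdeg _ h
  rcases i with a | a | a <;> rcases j with b | b | b <;>
    simp only [par, qdeg, add_zero, zero_add, zero_ne_one, CharTwo.add_self_eq_zero] at hpar' hdeg'
  · exact h (hLG a b)
  · obtain rfl : b = 2 * (-a - 1) + 1 := by qify; linarith
    exact h (hTG a)
  · exact h (hGL b a)
  · obtain rfl : a = 2 * (-b - 1) + 1 := by qify; linarith
    have hb := hGT (-b - 1)
    rw [neg_sub, sub_neg_eq_add, add_sub_cancel_left] at hb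
    exact h hb

/-- For `N` large, the right-hand side no longer sees the `L ⊗ G` part of `v`. -/
lemma apply_L_G_eq_zero_of_action_T_action_T {v : V} (h : ∀ N, action (e (.T 0))
    (action (e (.T 0)) v) = action (e (.T N)) (action (e (.T (-N))) v)) (a b : ℤ) :
    v (.L a, .G b) = 0 := by
  have coeff (k l c : ℤ) : action (e (.T k)) (action (e (.T l)) v) (.T a, .G c) =
      ((k : ℂ) + 1 / 2) * v (.L (a - k), .G (c - 2 * l - 1)) +
        (((l : ℂ) + 1 / 2) * v (.L (a - l), .G (c - 2 * k - 1)) +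
          v (.T a, .G (c - 2 * k - 1 - 2 * l - 1))) := by
    rw [action_T_apply_T_G, action_T_apply_L_G, action_T_apply_T_G]
  have hfar : ∀ᶠ N in cofinite, v (.L (a - N), .G (b + 2 * N)) = 0 :=
    eventually_apply_eq_zero v fun m n h => by simpa using congrArg Prod.fst h
  obtain ⟨N, hN, hN'⟩ := (hfar.and (neg_injective.tendsto_cofinite.eventually hfar)).exists
  have h' := DFunLike.congr_fun (h N) (.T a, .G (b + 1))
  rw [coeff, coeff, show b + 1 - 2 * -N - 1 = b + 2 * N by ring, hN,
    show b + 1 - 2 * N - 1 = b + 2 * -N by ring, hN', show b + 2 * -N - 2 * -N - 1 = b - 1 by ring,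
    mul_zero, sub_zero, sub_zero, add_sub_cancel_right, sub_zero, Int.cast_zero] at h'
  linear_combination h'

lemma IsDerOfParity.map_G_zero_apply_L_G (hd : IsDerOfParity 0 d) (hT : ∀ k, d (e (.T k)) = 0)
    (a b : ℤ) : d (e (.G 0)) (.L a, .G b) = 0 := by
  have hTT (k l : ℤ) : action (e (.T k)) (action (e (.T l)) (d (e (.G 0)))) =
      d (e (.G (2 * (k + l) + 2))) := by
    have h (k n : ℤ) : action (e (.T k)) (d (e (.G n))) = d (e (.G (n + 2 * k + 1))) := by
      rw [hd.map_bk_T_G, hT, map_zero, sub_zero]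
    rw [h, h]
    ring_nf
  refine apply_L_G_eq_zero_of_action_T_action_T (fun N => ?_) a b
  rw [hTT, hTT, add_neg_cancel, add_zero]

lemma IsDerOfParity.map_G_zero_apply_G_L (hd : IsDerOfParity 0 d) (hT : ∀ k, d (e (.T k)) = 0)
    (a b : ℤ) : d (e (.G 0)) (.G b, .L a) = 0 := by
  have h := hd.twist_comp.map_G_zero_apply_L_G (fun k => by rw [LinearMap.comp_apply, hT, map_zero])
    a b
  rwa [LinearMap.comp_apply, twist_apply, par, zero_mul, sgn_zero, one_mul] at h

lemma IsDerOfParity.map_G_zero_apply_T_G (hd : IsDerOfParity 0 d) (hT : ∀ k, d (e (.T k)) = 0)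
    (a b : ℤ) : d (e (.G 0)) (.T a, .G (2 * b + 1)) = d (e (.G 0)) (.G (2 * a + 1), .T b) := by
  have hL : action (e (.T 0)) (d (e (.L 0))) = 0 := by
    have h := hd.map_bk_L_T 0 0
    rwa [hT, hT, map_zero, smul_zero, zero_sub, eq_comm, neg_eq_zero] at h
  have h := DFunLike.congr_fun (hd.map_bk (.G 0) (.G 0)) (.G (2 * a + 1), .G (2 * b + 1))
  have hbk : bk (.G 0) (.G 0) = (2 : ℂ) • e (.L 0) := bk_G_zero_G_even 0
  rw [hbk, map_smul, Finsupp.smul_apply, apply_G_G_eq_zero_of_action_T_zero hL, par, mul_one,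
    sgn_one, neg_one_smul, sub_neg_eq_add, Finsupp.add_apply, action_G_zero_apply_G_G] at h
  linear_combination (norm := (simp only [smul_zero]; ring)) h / 2

/-- The vector `∑ cⱼ T_{j+1/2} ⊗ T_{-j-1/2}` of `V_0`; the value at `G_0` of a derivation that
vanishes on the `T_r` is matched by the action on such a vector. -/
def toralVector (c : ℤ →₀ ℂ) : V :=
  Finsupp.mapDomain (fun j => (.T j, .T (-j - 1))) c

lemma toralVector_mem_weightSpace_par (c : ℤ →₀ ℂ) : toralVector c ∈ weightSpace par 0 :=
  mapDomain_mem_weightSpace (fun _ => CharTwo.add_self_eq_zero _) c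

lemma toralVector_mem_weightSpace_qdeg (c : ℤ →₀ ℂ) : toralVector c ∈ weightSpace qdeg 0 := by
  refine mapDomain_mem_weightSpace (fun j => ?_) c
  simp only [qdeg]
  push_cast
  ring

lemma toralVector_apply_T_T (c : ℤ →₀ ℂ) (j : ℤ) : toralVector c (.T j, .T (-j - 1)) = c j := by
  have hinj : Function.Injective fun j : ℤ => (Idx.T j, Idx.T (-j - 1)) := fun i j h => by
    simpa using congrArg Prod.fst h
  exact Finsupp.mapDomain_apply hinj c j

lemma action_T_toralVector (c : ℤ →₀ ℂ) (k : ℤ) : action (e (.T k)) (toralVector c) = 0 := by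
  have hoff (p : Idx × Idx) (hp : ∀ j, (.T j, .T (-j - 1)) ≠ p) : toralVector c p = 0 :=
    Finsupp.mapDomain_of_notMem_range c p (by simpa using hp)
  refine eq_zero_of_even_of_half_integer (k := k) ?_ ?_ (fun i => ?_) (fun i => ?_) fun n => ?_
  · exact action_mem_weightSpace_par (.T k) (toralVector_mem_weightSpace_par c)
  · rw [← add_zero ((k : ℚ) + 1 / 2)]
    exact action_mem_weightSpace_qdeg (.T k) (toralVector_mem_weightSpace_qdeg c)
  · rw [action_T_apply_L_T, hoff _ (by simp), mul_zero]
  · rw [action_T_apply_T_L, hoff _ (by simp), mul_zero]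
  · rw [action_T_apply_G_G, hoff _ (by simp), hoff _ (by simp), add_zero]

lemma exists_sub_innMap_eq_zero (hd : IsDerOfParity 0 d) (hdeg : IsDegHomogDer 0 d)
    (hT : ∀ k, d (e (.T k)) = 0) : ∃ w : V, IsDegV 0 w ∧ d - innMap 0 w = 0 := by
  have hinj : Function.Injective fun j : ℤ => (Idx.T j, Idx.G (2 * (-j - 1) + 1)) :=
    fun i j h => by simpa using congrArg Prod.fst h
  let c : ℤ →₀ ℂ := -Finsupp.ofSupportFinite _ (eventually_apply_eq_zero (d (e (.G 0))) hinj)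
  have hc (j : ℤ) : c j = -d (e (.G 0)) (.T j, .G (2 * (-j - 1) + 1)) := rfl
  let w := toralVector c
  have hw : IsDegV 0 w := toralVector_mem_weightSpace_qdeg c
  have hd' := hd.sub (isDerOfParity_innMap (toralVector_mem_weightSpace_par c))
  have hdeg' := hdeg.sub (isDegHomogDer_innMap 0 hw)
  have hT' (k : ℤ) : (d - innMap 0 w) (e (.T k)) = 0 := by
    rw [LinearMap.sub_apply, innMap_zero_apply, hT, action_T_toralVector, sub_zero]
  have hTG (a : ℤ) : (d - innMap 0 w) (e (.G 0)) (.T a, .G (2 * (-a - 1) + 1)) = 0 := by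
    have hGG : w (.G (2 * a + 1), .G (2 * (-a - 1) + 1)) = 0 :=
      Finsupp.mapDomain_of_notMem_range c _ (by simp)
    rw [LinearMap.sub_apply, innMap_zero_apply, Finsupp.sub_apply, action_G_zero_apply_T_G, hGG,
      toralVector_apply_T_T, hc, mul_zero, zero_sub, neg_neg, sub_self]
  refine ⟨w, hw, hd'.eq_zero_of_T_of_G hT' ?_⟩
  refine eq_zero_of_odd_of_degree_zero (hd'.1 (.G 0)) ?_ (hd'.map_G_zero_apply_L_G hT')
    (hd'.map_G_zero_apply_G_L hT') hTG fun a => ?_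
  · convert isDegV_iff.1 (hdeg' (.G 0))
    simp [qdeg]
  · rw [← hd'.map_G_zero_apply_T_G hT', hTG]

end VanishingOnG

/-- An even homogeneous super-derivation `d₀ : 𝓛 → V = 𝓛 ⊗ 𝓛` of degree `0`
is inner: there is `u ∈ V_0` with `d₀(x) = x ∗ u` for all `x ∈ 𝓛`. -/
theorem even_degree_zero_der_is_inner (d : Lsa →ₗ[ℂ] V)
    (hd : IsDerOfParity 0 d) (hhom : IsDegHomogDer 0 d) :
    ∃ u : V, IsDegV 0 u ∧ ∀ x : Lsa, d x = act2 x u := by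
  obtain ⟨u, hpar, hu, hT⟩ := exists_sub_innMap_map_T_eq_zero hd hhom
  obtain ⟨w, hw, h⟩ := exists_sub_innMap_eq_zero (hd.sub (isDerOfParity_innMap hpar))
    (hhom.sub (isDegHomogDer_innMap 0 hu)) hT
  refine ⟨u + w, (weightSpace qdeg 0).add_mem hu hw, fun x => ?_⟩
  have hx : d x - action x u - action x w = 0 := by
    simpa only [LinearMap.sub_apply, innMap_zero_apply, LinearMap.zero_apply] using
      LinearMap.congr_fun h x
  rw [act2_eq_action, map_add, ← sub_eq_zero, ← sub_sub, hx]

end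
end N2
end

section
/- Let L be the centerless twisted N=2 superconformal algebra, V = L ⊗ L the L-module under the adjoint diagonal action, and let d ∈ Der(L, V) be a super-derivation with homogeneous decomposition d = Σ_{i ∈ (1/2)ℤ} d_i, where each d_i is a homogeneous derivation of degree i and each d_i = (v_i)_inn is inner for some v_i ∈ V_i. Then only finitely many of the v_i are nonzero; in particular the sum d = Σ_i d_i is finite and d is inner. -/
namespace N2

noncomputable section

/-!
The element `L_0` acts on `V_ι` as the scalar `-ι`, so `(v_ι)_inn(L_0) = -ι v_ι`. Summability at the
single element `u = L_0` therefore already forces `v_ι = 0` for all but finitely many `ι ≠ 0`, and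
the finite sum of the `v_ι` is the element whose inner derivation is `d`.
-/

theorem finite_setOf_ne_zero_of_mem_eigenspace {ι R M : Type*} [CommRing R] [IsDomain R]
    [AddCommGroup M] [Module R M] [Module.IsTorsionFree R M] {f : Module.End R M} {μ : ι → R}
    {v : ι → M} (hv : ∀ i, v i ∈ f.eigenspace (μ i)) (hμ : {i | μ i = 0}.Finite)
    (hf : {i | f (v i) ≠ 0}.Finite) : {i | v i ≠ 0}.Finite := by
  refine (hμ.union hf).subset fun i hi => or_iff_not_imp_left.mpr fun hμi => ?_
  change f (v i) ≠ 0
  rw [Module.End.mem_eigenspace_iff.mp (hv i)]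
  exact smul_ne_zero hμi hi

/-- The adjoint diagonal action `act2` of `𝓛` on `V = 𝓛 ⊗ 𝓛` as a bilinear map, determined by its
values on pairs of basis vectors. -/
def act2Lin : Lsa →ₗ[ℂ] V →ₗ[ℂ] V :=
  Finsupp.linearCombination ℂ fun i => Finsupp.linearCombination ℂ fun p =>
    ((bk i p.1).sum fun k t => Finsupp.single (k, p.2) t)
      + sgn (par i * par p.1) • ((bk i p.2).sum fun k t => Finsupp.single (p.1, k) t)

theorem act2Lin_apply (x : Lsa) (v : V) : act2Lin x v = act2 x v := by
  simp only [act2Lin, act2, Finsupp.linearCombination_apply, Finsupp.sum, LinearMap.sum_apply,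
    LinearMap.smul_apply, Finset.smul_sum, mul_smul]

/-- The assignment `a ↦ a_inn` of `innMap ε`, as a linear map in `a`. -/
def innLin (ε : ZMod 2) : V →ₗ[ℂ] Lsa →ₗ[ℂ] V :=
  (ofBasis fun i => sgn (ε * par i) • act2Lin (e i)).flip

theorem innLin_apply (ε : ZMod 2) (a : V) : innLin ε a = innMap ε a :=
  Finsupp.basisSingleOne.ext fun i => by
    simp [innLin, innMap, ofBasis, act2Lin_apply]

theorem bk_L_zero (i : Idx) : bk (.L 0) i = (-(qdeg i : ℂ)) • e i := by
  cases i <;> simp [bk, qdeg, neg_div]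

theorem act2Lin_L_zero_single (p : Idx × Idx) (c : ℂ) :
    act2Lin (e (.L 0)) (Finsupp.single p c)
      = (-((qdeg p.1 + qdeg p.2 : ℚ) : ℂ)) • Finsupp.single p c := by
  obtain ⟨i, j⟩ := p
  have hsgn : sgn (par (.L 0) * par i) = 1 := by simp [par, sgn]
  simp only [act2Lin, e, bk_L_zero, hsgn, Finsupp.linearCombination_single, Finsupp.smul_single,
    Finsupp.sum_single_index, Finsupp.single_zero, smul_eq_mul, mul_one, one_smul,
    ← Finsupp.single_add]
  congr 1
  push_cast
  ring

theorem IsDegV.mem_eigenspace {q : ℚ} {v : V} (hv : IsDegV q v) :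
    v ∈ Module.End.eigenspace (act2Lin (e (.L 0))) (-(q : ℂ)) := by
  rw [← v.sum_single]
  refine Submodule.sum_mem _ fun p hp => Module.End.mem_eigenspace_iff.mpr ?_
  rw [act2Lin_L_zero_single, hv p hp]

theorem innMap_L_zero (ε : ZMod 2) (a : V) :
    innMap ε a (e (.L 0)) = act2Lin (e (.L 0)) a := by
  simp [innMap, ofBasis, e, act2Lin_apply, par, sgn]

theorem summable_inner_decomposition_is_finite_general {ι : Type*} (ε : ZMod 2) (d : Lsa →ₗ[ℂ] V)
    (v : ι → V) (q : ι → ℚ) (hq : {i | q i = 0}.Finite) (hv : ∀ i, IsDegV (q i) (v i))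
    (hL : {i | innMap ε (v i) (e (.L 0)) ≠ 0}.Finite)
    (hsum : ∀ u : Lsa, d u = ∑ᶠ i, innMap ε (v i) u) :
    {i | v i ≠ 0}.Finite ∧ ∃ a : V, d = innMap ε a := by
  have hfin : {i | v i ≠ 0}.Finite :=
    finite_setOf_ne_zero_of_mem_eigenspace (fun i => (hv i).mem_eigenspace)
      (by simpa using hq) (by simpa only [innMap_L_zero] using hL)
  refine ⟨hfin, ∑ᶠ i, v i, LinearMap.ext fun u => ?_⟩
  rw [hsum]
  calc ∑ᶠ i, innMap ε (v i) u = ∑ᶠ i, (innLin ε).flip u (v i) := by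
        simp only [LinearMap.flip_apply, innLin_apply]
    _ = (innLin ε).flip u (∑ᶠ i, v i) := (map_finsum _ hfin).symm
    _ = innMap ε (∑ᶠ i, v i) u := by rw [LinearMap.flip_apply, innLin_apply]

/-- If a super-derivation `d : 𝓛 → V = 𝓛 ⊗ 𝓛` decomposes as a summable sum
`d = Σ_{ι ∈ (1/2)ℤ} (v_ι)_inn` with `v_ι ∈ V_ι` (half integers `ι`
parametrized as `k/2`, `k ∈ ℤ`), then only finitely many `v_ι` are nonzero;
in particular the sum is finite and `d` is inner. -/
theorem summable_inner_decomposition_is_finite (ε : ZMod 2) (d : Lsa →ₗ[ℂ] V)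
    (hd : IsDerOfParity ε d) (v : ℤ → V)
    (hv : ∀ k : ℤ, IsParityV ε (v k) ∧ IsDegV ((k : ℚ) / 2) (v k))
    (hsum : ∀ u : Lsa,
      {k : ℤ | innMap ε (v k) u ≠ 0}.Finite ∧ d u = ∑ᶠ k : ℤ, innMap ε (v k) u) :
    {k : ℤ | v k ≠ 0}.Finite ∧ ∃ a : V, d = innMap ε a :=
  summable_inner_decomposition_is_finite_general ε d v (fun k => (k : ℚ) / 2) (by simp)
    (fun k => (hv k).2) (hsum (e (.L 0))).1 fun u => (hsum u).2

end
end N2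
end
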